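/- arXiv:1004.3550 — 6 statements merged into one kernel-verified Lean document; each statement's English description precedes it below -/
import Mathlib

section
/- Let p be an odd prime and let i, j, k be integers with p ∤ i, p ∤ j, p ∤ k. Then the number of pairs (x, y) of units of ℤ/pℤ satisfying x⁻¹ + y⁻¹ = 1 and i·x + j·y = k (in ℤ/pℤ) equals c_{i,j,k} = 1 + (β(i,j,k)/p). In particular this count lies in {0, 1, 2}. -/
/-!
Clearing denominators, `x⁻¹ + y⁻¹ = 1` becomes `x + y = x y`. Eliminating `y` with
`i x + j y = k` leaves the quadratic `i x² + (j - i - k) x + k = 0`, whose discriminant is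
`(j - i - k)² - 4 i k = β(i,j,k)`. Completing the square, `(x, y) ↦ 2 i x + j - i - k` is a
bijection from the solutions onto the square roots of `β(i,j,k)` in `ℤ/pℤ`, and there are
`1 + (β(i,j,k)/p)` of these. The roots give units automatically, because `x = 0` or `y = 0`
together with `x + y = x y` would force `k = 0`.
-/

open scoped BigOperators

/-- `β(i,j,k) = i² + j² + k² − 2ij − 2jk − 2ik`. -/
def β (i j k : ℤ) : ℤ := i ^ 2 + j ^ 2 + k ^ 2 - 2 * i * j - 2 * j * k - 2 * i * k

/-- For an odd prime `p` and integers `i, j, k` not divisible by `p`,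
the number of pairs `(x, y)` of units of `ℤ/pℤ` with `x⁻¹ + y⁻¹ = 1` and
`i·x + j·y = k` equals `c_{i,j,k} = 1 + (β(i,j,k)/p)`. -/
theorem stmt1 (p : ℕ) [Fact p.Prime] (hp : Odd p) (i j k : ℤ)
    (hi : ¬ (p : ℤ) ∣ i) (hj : ¬ (p : ℤ) ∣ j) (hk : ¬ (p : ℤ) ∣ k) :
    ((Finset.univ.filter (fun xy : (ZMod p)ˣ × (ZMod p)ˣ =>
        ((xy.1⁻¹ : (ZMod p)ˣ) : ZMod p) + ((xy.2⁻¹ : (ZMod p)ˣ) : ZMod p) = 1 ∧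
        (i : ZMod p) * (xy.1 : ZMod p) + (j : ZMod p) * (xy.2 : ZMod p) = (k : ZMod p))).card : ℤ)
      = 1 + legendreSym p (β i j k) := by
  have hp2 : p ≠ 2 := by rintro rfl; exact absurd hp (by decide)
  have hI : (i : ZMod p) ≠ 0 := fun h => hi ((ZMod.intCast_zmod_eq_zero_iff_dvd i p).1 h)
  have hJ : (j : ZMod p) ≠ 0 := fun h => hj ((ZMod.intCast_zmod_eq_zero_iff_dvd j p).1 h)
  have hK : (k : ZMod p) ≠ 0 := fun h => hk ((ZMod.intCast_zmod_eq_zero_iff_dvd k p).1 h)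
  have h2 : (2 : ZMod p) ≠ 0 := Ring.two_ne_zero ((ZMod.ringChar_zmod_n p).substr hp2)
  have hβ : ((β i j k : ℤ) : ZMod p) =
      ((j : ZMod p) - i - k) ^ 2 - 4 * i * k := by
    simp only [β]; push_cast; ring
  have key : ∀ x y : (ZMod p)ˣ, ((x⁻¹ : (ZMod p)ˣ) : ZMod p) + ((y⁻¹ : (ZMod p)ˣ) : ZMod p) = 1 ↔
      (x : ZMod p) + y = x * y := by
    intro x y
    have hx := x.ne_zero
    have hy := y.ne_zero
    rw [Units.val_inv_eq_inv_val, Units.val_inv_eq_inv_val]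
    field_simp
    rw [add_comm]
  rw [add_comm, ← legendreSym.card_sqrts p hp2 (β i j k)]
  congr 1
  refine Finset.card_bij (fun xy _ => 2 * (i : ZMod p) * (xy.1 : ZMod p) + j - i - k) ?_ ?_ ?_
  · rintro ⟨x, y⟩ h
    simp only [Finset.mem_filter, Finset.mem_univ, true_and, key] at h
    obtain ⟨h1, h3⟩ := h
    simp only [Set.mem_toFinset, Set.mem_ofPred_eq, hβ]
    linear_combination 4 * (i : ZMod p) * j * h1 + 4 * i * ((x : ZMod p) - 1) * h3
  · rintro ⟨x, y⟩ h ⟨x', y'⟩ h' he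
    simp only [Finset.mem_filter, Finset.mem_univ, true_and] at h h'
    have hx : (x : ZMod p) = x' :=
      mul_left_cancel₀ (mul_ne_zero h2 hI) (by linear_combination he)
    have hy : (y : ZMod p) = y' :=
      mul_left_cancel₀ hJ (by linear_combination h.2 - h'.2 - (i : ZMod p) * hx)
    rw [Units.ext hx, Units.ext hy]
  · intro s hs
    simp only [Set.mem_toFinset, Set.mem_ofPred_eq, hβ] at hs
    obtain ⟨x, hx⟩ : ∃ x : ZMod p, 2 * (i : ZMod p) * x = s - j + i + k :=
      ⟨(s - j + i + k) / (2 * i), mul_div_cancel₀ _ (mul_ne_zero h2 hI)⟩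
    obtain ⟨y, hy⟩ : ∃ y : ZMod p, (j : ZMod p) * y = k - i * x :=
      ⟨(k - i * x) / j, mul_div_cancel₀ _ hJ⟩
    have hquad : (i : ZMod p) * x ^ 2 + (j - i - k) * x + k = 0 := by
      have hs' : s = 2 * i * x + j - i - k := by linear_combination -hx
      rw [hs'] at hs
      refine (mul_eq_zero.1 ?_).resolve_left (mul_ne_zero (mul_ne_zero h2 h2) hI)
      linear_combination hs
    have hxy : x + y = x * y := by
      refine mul_left_cancel₀ hJ ?_
      linear_combination hquad + (1 - x) * hy
    have hx0 : x ≠ 0 := by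
      rintro rfl
      exact hK (by linear_combination hquad)
    have hy0 : y ≠ 0 := by
      rintro rfl
      exact hx0 (by linear_combination hxy)
    refine ⟨(Units.mk0 x hx0, Units.mk0 y hy0), ?_, ?_⟩
    · simp only [Finset.mem_filter, Finset.mem_univ, true_and, key, Units.val_mk0]
      exact ⟨hxy, by linear_combination hy⟩
    · simp only [Units.val_mk0]
      linear_combination hx
end

section
/- Let p > 3 be an odd prime and let i, k be integers with p ∤ i and p ∤ k. Then ∑_{j=1}^{p−1} c_{i,j,k} = p − 2 if k ≡ i (mod p), and ∑_{j=1}^{p−1} c_{i,j,k} = p − 3 if k ≢ i (mod p). -/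
/-!
Completing the square gives `β(i,j,k) = (j - i - k)² - 4ik`, so over all `j` in `ZMod p` the
characters `χ(β(i,j,k))` sum to the value of `∑ x, χ(x² - d)` with `d = 4ik ≠ 0`. This is `-1`:
`∑ x, (1 + χ(x² - d))` counts the points of the hyperbola `x² - y² = d`, which are parametrized
by the `q - 1` nonzero values of `x - y`. Removing the term `j = 0`, which is `χ((i - k)²)`,
i.e. `0` or `1` according to whether `k ≡ i`, gives the theorem.
-/

open scoped BigOperators

lemma card_hyperbola {F : Type*} [Field F] [Fintype F] [DecidableEq F] (h2 : (2 : F) ≠ 0)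
    {d : F} (hd : d ≠ 0) :
    (Finset.univ.filter (fun z : F × F => z.2 ^ 2 = z.1 ^ 2 - d)).card
      = (Finset.univ.erase (0 : F)).card := by
  -- `(x, y)` corresponds to `u = x - y`; then `x + y = d / u`.
  refine Finset.card_bij' (fun z _ => z.1 - z.2)
    (fun u _ => ((d / u + u) / 2, (d / u - u) / 2)) ?_ ?_ ?_ ?_
  · rintro ⟨x, y⟩ h
    simp only [Finset.mem_filter, Finset.mem_univ, true_and, Finset.mem_erase, and_true] at h ⊢
    intro h0
    apply hd
    linear_combination h + (x + y) * h0
  · intro u hu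
    simp only [Finset.mem_filter, Finset.mem_univ, true_and, Finset.mem_erase, and_true] at hu ⊢
    field_simp
    ring
  · rintro ⟨x, y⟩ h
    simp only [Finset.mem_filter, Finset.mem_univ, true_and] at h
    have h0 : x - y ≠ 0 := by
      intro h0
      apply hd
      linear_combination h + (x + y) * h0
    have hq : d / (x - y) = x + y := by
      rw [div_eq_iff h0]
      linear_combination h
    simp only [hq, Prod.mk.injEq]
    constructor <;> field_simp <;> ring
  · intro u hu
    have hu0 : u ≠ 0 := by simpa using hu
    field_simp
    ring

lemma sum_quadraticChar_sq_sub {F : Type*} [Field F] [Fintype F] [DecidableEq F]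
    (hF : ringChar F ≠ 2) {d : F} (hd : d ≠ 0) :
    ∑ x : F, quadraticChar F (x ^ 2 - d) = -1 := by
  have hcard := card_hyperbola (Ring.two_ne_zero hF) hd
  rw [Finset.card_filter, Fintype.sum_prod_type, Finset.card_erase_of_mem (Finset.mem_univ _),
    Finset.card_univ] at hcard
  have hpt : ∀ x : F, ((∑ y : F, if y ^ 2 = x ^ 2 - d then 1 else 0 : ℕ) : ℤ)
      = quadraticChar F (x ^ 2 - d) + 1 := by
    intro x
    rw [← quadraticChar_card_sqrts hF, ← Finset.card_filter]
    congr 2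
    ext y
    simp
  have hsum : ∑ x : F, (quadraticChar F (x ^ 2 - d) + 1) = (Fintype.card F : ℤ) - 1 := by
    rw [← Finset.sum_congr rfl (fun x _ => hpt x), ← Nat.cast_sum, hcard,
      Nat.cast_sub Fintype.card_pos, Nat.cast_one]
  rw [Finset.sum_add_distrib, Finset.sum_const, Finset.card_univ, nsmul_eq_mul] at hsum
  linarith

lemma sum_Icc_intCast (p : ℕ) [Fact p.Prime] (f : ZMod p → ℤ) :
    ∑ j ∈ Finset.Icc (1 : ℤ) ((p : ℤ) - 1), f (j : ZMod p)
      = ∑ x ∈ Finset.univ.erase (0 : ZMod p), f x := by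
  refine Finset.sum_bij' (fun j _ => (j : ZMod p)) (fun x _ => (x.val : ℤ)) ?_ ?_ ?_ ?_ ?_
  · intro j hj
    rw [Finset.mem_Icc] at hj
    simp only [Finset.mem_erase, Finset.mem_univ, and_true]
    rw [Ne, ZMod.intCast_zmod_eq_zero_iff_dvd]
    intro h
    have := Int.le_of_dvd (by omega) h
    omega
  · intro x hx
    have hx0 : x.val ≠ 0 := by simpa using hx
    have := ZMod.val_lt x
    rw [Finset.mem_Icc]
    omega
  · intro j hj
    rw [Finset.mem_Icc] at hj
    rw [ZMod.val_intCast, Int.emod_eq_of_lt] <;> omega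
  · intro x _
    simp
  · intro j _
    rfl

/-- For an odd prime `p > 3` and integers `i, k` not divisible by `p`,
`∑_{j=1}^{p−1} c_{i,j,k}` equals `p − 2` if `k ≡ i (mod p)` and `p − 3` otherwise,
where `c_{i,j,k} = 1 + (β(i,j,k)/p)`. -/
theorem stmt2 (p : ℕ) [Fact p.Prime] (hp : 3 < p) (i k : ℤ)
    (hi : ¬ (p : ℤ) ∣ i) (hk : ¬ (p : ℤ) ∣ k) :
    (∑ j ∈ Finset.Icc (1 : ℤ) ((p : ℤ) - 1), (1 + legendreSym p (β i j k)))
      = if (k : ZMod p) = (i : ZMod p) then (p : ℤ) - 2 else (p : ℤ) - 3 := by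
  have hF : ringChar (ZMod p) ≠ 2 := by
    rw [ZMod.ringChar_zmod_n]
    omega
  have h2 : (2 : ZMod p) ≠ 0 := Ring.two_ne_zero hF
  have hi' : (i : ZMod p) ≠ 0 := by rwa [Ne, ZMod.intCast_zmod_eq_zero_iff_dvd]
  have hk' : (k : ZMod p) ≠ 0 := by rwa [Ne, ZMod.intCast_zmod_eq_zero_iff_dvd]
  have hd : (2 * 2 * i * k : ZMod p) ≠ 0 := by simp [h2, hi', hk']
  have hβ : ∀ j : ℤ, legendreSym p (β i j k)
      = quadraticChar (ZMod p) (((j : ZMod p) - (i + k)) ^ 2 - 2 * 2 * i * k) := by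
    intro j
    rw [legendreSym, β]
    congr 1
    push_cast
    ring
  have hall : ∑ x : ZMod p, quadraticChar (ZMod p) ((x - (i + k)) ^ 2 - 2 * 2 * i * k) = -1 := by
    rw [← sum_quadraticChar_sq_sub hF hd]
    exact (Equiv.subRight ((i : ZMod p) + k)).sum_comp
      (fun x => quadraticChar (ZMod p) (x ^ 2 - 2 * 2 * i * k))
  have h0 : ((0 : ZMod p) - (i + k)) ^ 2 - 2 * 2 * i * k = (k - i) ^ 2 := by ring
  rw [← Finset.add_sum_erase _ _ (Finset.mem_univ (0 : ZMod p)), h0] at hall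
  simp only [hβ]
  rw [Finset.sum_add_distrib, sum_Icc_intCast p
    (fun x => quadraticChar (ZMod p) ((x - (i + k)) ^ 2 - 2 * 2 * i * k)), Finset.sum_const,
    Int.card_Icc, nsmul_eq_mul, mul_one, Int.toNat_of_nonneg (by omega)]
  split_ifs with h
  · rw [sub_eq_zero.mpr h, zero_pow two_ne_zero, quadraticChar_zero] at hall
    linarith
  · rw [quadraticChar_sq_one' (sub_ne_zero.mpr h)] at hall
    linarith
end

section
/- Let p > 3 be an odd prime and let i, j be integers with p ∤ i and p ∤ j. If j ≡ i (mod p), then there is exactly one k ∈ {1, …, p−1} with p | β(i,j,k). If j ≢ i (mod p), then the number of k ∈ {1, …, p−1} with p | β(i,j,k) equals 2 if ij is a quadratic residue modulo p and equals 0 if ij is a quadratic nonresidue modulo p. -/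
/-!
Since `β(i,j,k) = (k - (i + j))² - 4ij`, the integer `k` is a zero of `β(i,j,·)` modulo `p` exactly
when `(k - (i + j))² = 4ij` in `ZMod p`. As `2` is invertible, there is no zero unless `ij` is a
square; if `ij = s²`, the zeros are the classes `i + j ± 2s`, which are distinct because `s ≠ 0`.
Their product is `(i - j)²`. So for `i ≠ j` both are nonzero and the count is `2`, while for `i = j`,
`s = i` they are `4i ≠ 0` and `0`, and the count is `1`. The lemma `card_filter_Icc_eq` passes from
representatives in `{1, …, p - 1}` to nonzero classes.
-/

open scoped BigOperators

/-- The zeros of `β(i,j,·)` among `1, …, p - 1` correspond to the nonzero classes `x` in `ZMod p`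
with `(x - (i + j))² = 4ij`. -/
lemma card_filter_Icc_eq (p : ℕ) [Fact p.Prime] (i j : ℤ) :
    ((Finset.Icc (1 : ℤ) ((p : ℤ) - 1)).filter (fun k => (p : ℤ) ∣ β i j k)).card =
      ((Finset.univ : Finset (ZMod p)).filter
        (fun x => x ≠ 0 ∧ (x - ((i : ZMod p) + j)) ^ 2 = 4 * (i * j))).card := by
  have hβ : ∀ k : ℤ, (p : ℤ) ∣ β i j k ↔
      ((k : ZMod p) - ((i : ZMod p) + j)) ^ 2 = 4 * (i * j) := by
    intro k
    rw [← ZMod.intCast_zmod_eq_zero_iff_dvd, ← sub_eq_zero (b := 4 * ((i : ZMod p) * j))]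
    have h : ((β i j k : ℤ) : ZMod p) =
        ((k : ZMod p) - ((i : ZMod p) + j)) ^ 2 - 4 * (i * j) := by
      unfold β
      push_cast
      ring
    rw [h]
  refine Finset.card_bij (fun k _ => (k : ZMod p)) ?_ ?_ ?_
  · intro k hk
    simp only [Finset.mem_filter, Finset.mem_Icc, Finset.mem_univ, true_and] at hk ⊢
    refine ⟨?_, (hβ k).1 hk.2⟩
    rw [Ne, ZMod.intCast_zmod_eq_zero_iff_dvd]
    intro hd
    have := Int.le_of_dvd (by lia) hd
    lia
  · intro k hk l hl hkl
    simp only [Finset.mem_filter, Finset.mem_Icc] at hk hl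
    have h := (ZMod.intCast_eq_intCast_iff' k l p).1 hkl
    rwa [Int.emod_eq_of_lt (by lia) (by lia), Int.emod_eq_of_lt (by lia) (by lia)] at h
  · intro x hx
    simp only [Finset.mem_filter, Finset.mem_univ, true_and] at hx
    have hcast : (((x.val : ℕ) : ℤ) : ZMod p) = x := by simp
    have hlt := ZMod.val_lt x
    have hpos : 0 < x.val := Nat.pos_of_ne_zero (by simpa using hx.1)
    refine ⟨(x.val : ℤ), ?_, hcast⟩
    simp only [Finset.mem_filter, Finset.mem_Icc]
    refine ⟨by lia, (hβ _).2 ?_⟩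
    rw [hcast]
    exact hx.2

lemma sq_sub_eq_iff {F : Type*} [Field F] (a b s x : F) (hs : a * b = s * s) :
    (x - (a + b)) ^ 2 = 4 * (a * b) ↔ x = a + b + 2 * s ∨ x = a + b - 2 * s := by
  have h : 4 * (a * b) = (2 * s) ^ 2 := by rw [hs]; ring
  rw [h, sq_eq_sq_iff_eq_or_eq_neg, sub_eq_iff_eq_add, sub_eq_iff_eq_add]
  constructor <;> rintro (h | h)
  · left; rw [h]; ring
  · right; rw [h]; ring
  · left; rw [h]; ring
  · right; rw [h]; ring

/-- For an odd prime `p > 3` and integers `i, j` not divisible by `p`: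
if `j ≡ i (mod p)` there is exactly one `k ∈ {1,…,p−1}` with `p ∣ β(i,j,k)`;
if `j ≢ i (mod p)` the number of such `k` is `2` when `ij` is a quadratic residue
mod `p` and `0` when it is a nonresidue. -/
theorem stmt3 (p : ℕ) [Fact p.Prime] (hp : 3 < p) (i j : ℤ)
    (hi : ¬ (p : ℤ) ∣ i) (hj : ¬ (p : ℤ) ∣ j) :
    (((j : ZMod p) = (i : ZMod p)) →
      ((Finset.Icc (1 : ℤ) ((p : ℤ) - 1)).filter (fun k => (p : ℤ) ∣ β i j k)).card = 1) ∧
    (((j : ZMod p) ≠ (i : ZMod p)) →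
      ((Finset.Icc (1 : ℤ) ((p : ℤ) - 1)).filter (fun k => (p : ℤ) ∣ β i j k)).card
        = if IsSquare ((i * j : ℤ) : ZMod p) then 2 else 0) := by
  have ha : (i : ZMod p) ≠ 0 := by rwa [Ne, ZMod.intCast_zmod_eq_zero_iff_dvd]
  have hb : (j : ZMod p) ≠ 0 := by rwa [Ne, ZMod.intCast_zmod_eq_zero_iff_dvd]
  have h2 : (2 : ZMod p) ≠ 0 := by
    intro h
    have h' : ((2 : ℕ) : ZMod p) = 0 := by exact_mod_cast h
    rw [ZMod.natCast_eq_zero_iff] at h'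
    have := Nat.le_of_dvd (by norm_num) h'
    lia
  rw [card_filter_Icc_eq, Int.cast_mul]
  generalize (i : ZMod p) = a at *
  generalize (j : ZMod p) = b at *
  constructor
  · rintro rfl
    rw [Finset.card_eq_one]
    refine ⟨4 * b, ?_⟩
    ext x
    simp only [Finset.mem_filter, Finset.mem_univ, true_and, Finset.mem_singleton,
      sq_sub_eq_iff b b b x rfl]
    constructor
    · rintro ⟨h0, h | h⟩
      · rw [h]; ring
      · exact absurd (by rw [h]; ring) h0
    · rintro rfl
      refine ⟨?_, Or.inl (by ring)⟩
      have h4 : (4 : ZMod p) = 2 * 2 := by norm_num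
      rw [h4]
      exact mul_ne_zero (mul_ne_zero h2 h2) hb
  · intro hab
    split_ifs with hsq
    · obtain ⟨s, hs⟩ := hsq
      have hs0 : s ≠ 0 := by
        rintro rfl
        exact mul_ne_zero ha hb (by simpa using hs)
      rw [Finset.card_eq_two]
      refine ⟨a + b + 2 * s, a + b - 2 * s, ?_, ?_⟩
      · intro h
        have h' : 2 * (2 * s) = 0 := by linear_combination h
        exact mul_ne_zero h2 (mul_ne_zero h2 hs0) h'
      · have hprod : (a + b + 2 * s) * (a + b - 2 * s) ≠ 0 := by
          have h : (a + b + 2 * s) * (a + b - 2 * s) = (b - a) ^ 2 := by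
            linear_combination 4 * hs
          rw [h]
          exact pow_ne_zero 2 (sub_ne_zero.2 hab)
        ext x
        simp only [Finset.mem_filter, Finset.mem_univ, true_and, Finset.mem_insert,
          Finset.mem_singleton, sq_sub_eq_iff a b s x hs]
        constructor
        · exact fun h => h.2
        · rintro (rfl | rfl)
          · exact ⟨left_ne_zero_of_mul hprod, Or.inl rfl⟩
          · exact ⟨right_ne_zero_of_mul hprod, Or.inr rfl⟩
    · rw [Finset.card_eq_zero, Finset.filter_eq_empty_iff]
      rintro x - ⟨-, hx⟩
      refine hsq ⟨(x - (a + b)) / 2, ?_⟩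
      field_simp
      linear_combination -hx
end

section
/- Let p be an odd prime and let c be an integer with c ≢ 0 (mod p) and c ≢ 1 (mod p). Then ∑_{u=0}^{p−1} (K(u) − K(cu))² = 2p² and ∑_{u=0}^{p−1} (K(u) + K(cu))² = 2p² − 4p, where the sums are over a complete set of residues u modulo p. -/
/-!
Write `ψ` for the standard additive character of `ℤ/pℤ`. Expanding both factors and summing over
`u` first, orthogonality of `ψ` turns the correlation `∑ u, K(u) K(cu)` (with `c ≠ 0`) into
`p` times the sum of `ψ(x + y)` over the pairs of units with `x⁻¹ + c y⁻¹ = 0`, that is `y = -c x`.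
Hence the correlation is `p ∑_{x ≠ 0} ψ((1 - c) x)` (`sum_K_mul_K`), which is `p (p - 1)` for
`c = 1` and `-p` otherwise. As `u ↦ c u` permutes the residues, `∑ K(cu)² = ∑ K(u)²`, and both
identities follow by expanding the squares.
-/

open scoped BigOperators

/-- The classical Kloosterman sum `K(u) = ∑_{x ∈ (ℤ/pℤ)ˣ} exp(2πi(x + u·x⁻¹)/p)`. -/
noncomputable def K (p : ℕ) [Fact p.Prime] (u : ZMod p) : ℂ :=
  ∑ x : (ZMod p)ˣ,
    Complex.exp (2 * Real.pi * Complex.I *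
      ((((x : ZMod p) + u * ((x⁻¹ : (ZMod p)ˣ) : ZMod p)).val : ℕ) : ℂ) / p)

lemma K_eq_stdAddChar (p : ℕ) [Fact p.Prime] (u : ZMod p) :
    K p u = ∑ x : (ZMod p)ˣ,
      ZMod.stdAddChar ((x : ZMod p) + u * ((x⁻¹ : (ZMod p)ˣ) : ZMod p)) := by
  unfold K
  refine Finset.sum_congr rfl fun x _ => ?_
  rw [ZMod.stdAddChar_apply, ZMod.toCircle_apply]

lemma sum_units_stdAddChar (p : ℕ) [Fact p.Prime] (b : ZMod p) :
    ∑ x : (ZMod p)ˣ, ZMod.stdAddChar ((x : ZMod p) * b)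
      = (if b = 0 then (p : ℂ) else 0) - 1 := by
  have h := AddChar.sum_mulShift b (ZMod.isPrimitive_stdAddChar p)
  have h0 : ∑ x : (ZMod p)ˣ, (ZMod.stdAddChar ((x : ZMod p) * b) : ℂ)
      = ∑ x ∈ Finset.univ.erase (0 : ZMod p), (ZMod.stdAddChar (x * b) : ℂ) := by
    refine Finset.sum_bij (fun x _ => (x : ZMod p)) (by simp) ?_ ?_ (by simp)
    · intro x _ y _ hxy
      exact Units.ext hxy
    · intro y hy
      exact ⟨Units.mk0 y (Finset.ne_of_mem_erase hy), by simp, by simp⟩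
  have h1 := Finset.add_sum_erase Finset.univ
    (fun x : ZMod p => (ZMod.stdAddChar (x * b) : ℂ)) (Finset.mem_univ 0)
  rw [h0, eq_sub_iff_add_eq, add_comm]
  simp only [zero_mul, AddChar.map_zero_eq_one] at h1
  rw [h1, h, ZMod.card]
  push_cast
  rfl

/-- The multiplicative correlation of Kloosterman sums, evaluated by orthogonality: only the pairs
`(x, -c x)` survive the summation over `u`. -/
lemma sum_K_mul_K (p : ℕ) [Fact p.Prime] (c : (ZMod p)ˣ) :
    ∑ u : ZMod p, K p u * K p (c * u)
      = p * ((if (1 : ZMod p) - c = 0 then (p : ℂ) else 0) - 1) := by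
  have horth (x y : (ZMod p)ˣ) :
      ∑ u : ZMod p, (ZMod.stdAddChar (u * (((x⁻¹ : (ZMod p)ˣ) : ZMod p)
        + (c : ZMod p) * ((y⁻¹ : (ZMod p)ˣ) : ZMod p))) : ℂ) = if y = -(c * x) then (p : ℂ) else 0 := by
    rw [AddChar.sum_mulShift _ (ZMod.isPrimitive_stdAddChar p), ZMod.card]
    have hiff : (((x⁻¹ : (ZMod p)ˣ) : ZMod p) + (c : ZMod p) * ((y⁻¹ : (ZMod p)ˣ) : ZMod p) = 0)
        ↔ y = -(c * x) := by
      rw [Units.ext_iff]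
      have hx := x.ne_zero
      have hy := y.ne_zero
      push_cast
      field_simp
      constructor <;> intro h <;> linear_combination h
    simp only [hiff]
    push_cast
    rfl
  calc ∑ u : ZMod p, K p u * K p (c * u)
      = ∑ u : ZMod p, ∑ x : (ZMod p)ˣ, ∑ y : (ZMod p)ˣ,
          (ZMod.stdAddChar ((x : ZMod p) + (y : ZMod p)) : ℂ)
            * ZMod.stdAddChar (u * (((x⁻¹ : (ZMod p)ˣ) : ZMod p)
              + (c : ZMod p) * ((y⁻¹ : (ZMod p)ˣ) : ZMod p))) := by
        refine Finset.sum_congr rfl fun u _ => ?_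
        rw [K_eq_stdAddChar, K_eq_stdAddChar, Finset.sum_mul_sum]
        refine Finset.sum_congr rfl fun x _ => Finset.sum_congr rfl fun y _ => ?_
        rw [← AddChar.map_add_eq_mul, ← AddChar.map_add_eq_mul]
        congr 1
        ring
    _ = ∑ x : (ZMod p)ˣ, ∑ y : (ZMod p)ˣ, (ZMod.stdAddChar ((x : ZMod p) + (y : ZMod p)) : ℂ)
          * if y = -(c * x) then (p : ℂ) else 0 := by
        rw [Finset.sum_comm]
        refine Finset.sum_congr rfl fun x _ => ?_
        rw [Finset.sum_comm]
        refine Finset.sum_congr rfl fun y _ => ?_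
        rw [← Finset.mul_sum, horth]
    _ = p * ∑ x : (ZMod p)ˣ, ZMod.stdAddChar ((x : ZMod p) * (1 - (c : ZMod p))) := by
        rw [Finset.mul_sum]
        refine Finset.sum_congr rfl fun x _ => ?_
        simp only [mul_ite, mul_zero, Finset.sum_ite_eq', Finset.mem_univ,
          if_true]
        rw [mul_comm]
        congr 2
        push_cast
        ring
    _ = _ := by rw [sum_units_stdAddChar]

/-- For an odd prime `p` and an integer `c` with `c ≢ 0, 1 (mod p)`,
`∑_{u=0}^{p−1} (K(u) − K(cu))² = 2p²` and `∑_{u=0}^{p−1} (K(u) + K(cu))² = 2p² − 4p`. -/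
theorem stmt10 (p : ℕ) [Fact p.Prime] (hp : Odd p) (c : ℤ)
    (hc0 : (c : ZMod p) ≠ 0) (hc1 : (c : ZMod p) ≠ 1) :
    (∑ u : ZMod p, (K p u - K p ((c : ZMod p) * u)) ^ 2 = 2 * (p : ℂ) ^ 2) ∧
    (∑ u : ZMod p, (K p u + K p ((c : ZMod p) * u)) ^ 2 = 2 * (p : ℂ) ^ 2 - 4 * (p : ℂ)) := by
  have h1 := sum_K_mul_K p 1
  have h2 := sum_K_mul_K p (Units.mk0 (c : ZMod p) hc0)
  simp only [Units.val_one, one_mul, sub_self, if_true] at h1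
  rw [Units.val_mk0, if_neg (sub_ne_zero.mpr hc1.symm)] at h2
  have h3 : ∑ u : ZMod p, K p ((c : ZMod p) * u) * K p ((c : ZMod p) * u)
      = ∑ u : ZMod p, K p u * K p u :=
    Fintype.sum_bijective _ (mulLeft_bijective₀ _ hc0) _ _ fun _ => rfl
  constructor
  · have e (u : ZMod p) : (K p u - K p ((c : ZMod p) * u)) ^ 2 = K p u * K p u
        + K p ((c : ZMod p) * u) * K p ((c : ZMod p) * u)
        - 2 * (K p u * K p ((c : ZMod p) * u)) := by ring
    simp only [e, Finset.sum_sub_distrib, Finset.sum_add_distrib, ← Finset.mul_sum]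
    rw [h3, h1, h2]
    ring
  · have e (u : ZMod p) : (K p u + K p ((c : ZMod p) * u)) ^ 2 = K p u * K p u
        + K p ((c : ZMod p) * u) * K p ((c : ZMod p) * u)
        + 2 * (K p u * K p ((c : ZMod p) * u)) := by ring
    simp only [e, Finset.sum_add_distrib, ← Finset.mul_sum]
    rw [h3, h1, h2]
    ring
end

section
/- Let p > 3 be an odd prime and let j, k be integers with p ∤ j and p ∤ k. Then ∑_{u=0}^{p−1} K(u)·K(ju)·K(ku) = (β(1,j,k)/p)·p² + 2p, where the sum is over a complete set of residues u modulo p. -/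
/-!
Write `ψ` for the standard additive character of `F = ℤ/pℤ`. Expanding the three Kloosterman sums
and summing over `u` first, orthogonality of characters gives
`p · ∑ ψ(x + y + z)` over units `x, y, z` with `x⁻¹ + j y⁻¹ + k z⁻¹ = 0`. This condition is
homogeneous, so with `x = z a`, `y = z b` the sum over `z` can be carried out:
it is `p - 1` if `a + b + 1 = 0` and `-1` otherwise. Hence the sum equals `p (p N₀ - N₁)`, where
* `N₁` counts the units `a, b` with `a⁻¹ + j b⁻¹ + k = 0`; there are `p - 2` of them
  (`count_all`);
* `N₀` counts those that also satisfy `a + b + 1 = 0`. Eliminating `b` leaves the roots of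
  `k a² + (1 - j + k) a + 1`, whose discriminant is `β(1, j, k)`, so that
  `N₀ = 1 + (β(1,j,k)/p)` (`count_line`).
-/

open scoped BigOperators

lemma K_eq (p : ℕ) [Fact p.Prime] (u : ZMod p) :
    K p u = ∑ x : (ZMod p)ˣ, ZMod.stdAddChar ((x : ZMod p) + u * (x : ZMod p)⁻¹) := by
  unfold K
  refine Finset.sum_congr rfl fun x _ => ?_
  rw [ZMod.stdAddChar_apply, ZMod.toCircle_apply, Units.val_inv_eq_inv_val]

lemma sum_units {F M : Type*} [Field F] [Fintype F] [DecidableEq F] [AddCommMonoid M]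
    (f : F → M) : ∑ x : Fˣ, f x = ∑ x : F, if x = 0 then 0 else f x := by
  have h1 : ∑ x : Fˣ, f x = ∑ x : {x : F // x ≠ 0}, f x :=
    Fintype.sum_equiv unitsEquivNeZero _ _ fun x => rfl
  rw [h1, ← Finset.sum_subtype (Finset.univ.filter fun x : F => x ≠ 0) (by simp) f,
    Finset.sum_filter]
  refine Finset.sum_congr rfl fun x _ => ?_
  by_cases hx : x = 0 <;> simp [hx]

lemma sum_char (p : ℕ) [Fact p.Prime] (c : ZMod p) :
    ∑ u : ZMod p, ZMod.stdAddChar (u * c) = if c = 0 then (p : ℂ) else 0 := by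
  have := AddChar.sum_mulShift c (ZMod.isPrimitive_stdAddChar p)
  simpa using this

lemma sum_char_units (p : ℕ) [Fact p.Prime] (c : ZMod p) :
    ∑ z : (ZMod p)ˣ, ZMod.stdAddChar ((z : ZMod p) * c) = (if c = 0 then (p : ℂ) else 0) - 1 := by
  rw [sum_units (fun z : ZMod p => (ZMod.stdAddChar (z * c) : ℂ)), ← sum_char p c,
    ← Finset.add_sum_erase _ _ (Finset.mem_univ (0 : ZMod p)),
    ← Finset.add_sum_erase _ (fun u : ZMod p => (ZMod.stdAddChar (u * c) : ℂ))
      (Finset.mem_univ (0 : ZMod p))]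
  simp only [if_true, zero_mul, AddChar.map_zero_eq_one, zero_add, add_sub_cancel_left]
  exact Finset.sum_congr rfl fun x hx => if_neg (Finset.ne_of_mem_erase hx)

/-- The substitutions `a ↦ a⁻¹`, `b ↦ j b⁻¹` turn the equation into `a + b + k = 0`, whose
solutions in units correspond to `a ≠ 0, -k`. -/
lemma count_all (p : ℕ) [Fact p.Prime] (j k : ZMod p) (hj : j ≠ 0) (hk : k ≠ 0) :
    ∑ a : (ZMod p)ˣ, ∑ b : (ZMod p)ˣ,
      (if (a : ZMod p)⁻¹ + j * (b : ZMod p)⁻¹ + k = 0 then (1 : ℂ) else 0) = p - 2 := by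
  have h1 : ∑ a : (ZMod p)ˣ, ∑ b : (ZMod p)ˣ,
      (if (a : ZMod p)⁻¹ + j * (b : ZMod p)⁻¹ + k = 0 then (1 : ℂ) else 0)
      = ∑ a : (ZMod p)ˣ, ∑ b : (ZMod p)ˣ,
      (if (a : ZMod p) + (b : ZMod p) + k = 0 then (1 : ℂ) else 0) := by
    refine Fintype.sum_equiv (Equiv.inv _) _ _ fun a => ?_
    refine Fintype.sum_equiv ((Equiv.inv _).trans (Equiv.mulLeft (Units.mk0 j hj))) _ _ fun b => ?_
    simp only [Equiv.trans_apply, Equiv.inv_apply, Equiv.coe_mulLeft, Units.val_mul,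
      Units.val_mk0, Units.val_inv_eq_inv_val]
  have h2 (a : (ZMod p)ˣ) : ∑ b : (ZMod p)ˣ,
      (if (a : ZMod p) + (b : ZMod p) + k = 0 then (1 : ℂ) else 0)
      = if (a : ZMod p) = -k then 0 else 1 := by
    rw [sum_units (fun b : ZMod p => if (a : ZMod p) + b + k = 0 then (1 : ℂ) else 0),
      Finset.sum_eq_single (-(a : ZMod p) - k)]
    · have : (-(a : ZMod p) - k = 0) ↔ (a : ZMod p) = -k := by grind
      simp only [this]
      rw [if_pos (by ring : (a : ZMod p) + (-(a : ZMod p) - k) + k = 0)]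
    · intro b _ hb
      have : ¬ ((a : ZMod p) + b + k = 0) := by grind
      rw [if_neg this, ite_self]
    · exact fun h => absurd (Finset.mem_univ _) h
  rw [h1, Finset.sum_congr rfl fun a _ => h2 a]
  have h3 (a : (ZMod p)ˣ) : (if (a : ZMod p) = -k then (0 : ℂ) else 1)
      = 1 - if a = Units.mk0 (-k) (neg_ne_zero.2 hk) then 1 else 0 := by
    have : a = Units.mk0 (-k) (neg_ne_zero.2 hk) ↔ (a : ZMod p) = -k := by
      rw [Units.ext_iff]; rfl
    by_cases h : (a : ZMod p) = -k <;> simp [this, h]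
  rw [Finset.sum_congr rfl fun a _ => h3 a, Finset.sum_sub_distrib]
  simp only [Finset.sum_const, Finset.card_univ, ZMod.card_units_eq_totient,
    Nat.totient_prime Fact.out, Finset.sum_ite_eq', Finset.mem_univ, if_true]
  have : 1 ≤ p := (Fact.out : p.Prime).one_le
  push_cast [nsmul_eq_mul, Nat.cast_sub this]
  ring

/-- Completing the square: `a ↦ 2 k a + b` maps the roots to the square roots of the
discriminant. -/
lemma count_roots (p : ℕ) [Fact p.Prime] (hp : p ≠ 2) (k b c : ZMod p) (hk : k ≠ 0) :
    ∑ a : ZMod p, (if k * a ^ 2 + b * a + c = 0 then (1 : ℂ) else 0)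
      = quadraticChar (ZMod p) (b ^ 2 - 4 * k * c) + 1 := by
  have hF : ringChar (ZMod p) ≠ 2 := by rwa [ZMod.ringChar_zmod_n]
  have h2 : (2 : ZMod p) ≠ 0 := Ring.two_ne_zero hF
  have h := quadraticChar_card_sqrts hF (b ^ 2 - 4 * k * c)
  have h' := congrArg (Int.cast : ℤ → ℂ) h
  push_cast at h'
  rw [← h']
  have h4 : ∑ a : ZMod p, (if k * a ^ 2 + b * a + c = 0 then (1 : ℂ) else 0)
      = ∑ w : ZMod p, if w ^ 2 = b ^ 2 - 4 * k * c then (1 : ℂ) else 0 := by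
    refine Fintype.sum_equiv
      ((Equiv.mulLeft₀ (2 * k) (mul_ne_zero h2 hk)).trans (Equiv.addRight b)) _ _ fun a => ?_
    have : (2 * k * a + b) ^ 2 = b ^ 2 - 4 * k * c ↔ k * a ^ 2 + b * a + c = 0 := by
      have e : (2 * k * a + b) ^ 2 - (b ^ 2 - 4 * k * c)
          = 2 * 2 * k * (k * a ^ 2 + b * a + c) := by ring
      rw [← sub_eq_zero, e]
      simp [h2, hk]
    simp [this]
  rw [h4, Finset.sum_boole]
  congr 2
  ext w
  simp

lemma count_line (p : ℕ) [Fact p.Prime] (hp : p ≠ 2) (j k : ZMod p) (hj : j ≠ 0) (hk : k ≠ 0) :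
    ∑ a : (ZMod p)ˣ, ∑ b : (ZMod p)ˣ,
      (if (a : ZMod p)⁻¹ + j * (b : ZMod p)⁻¹ + k = 0 then
        (if (a : ZMod p) + b + 1 = 0 then (1 : ℂ) else 0) else 0)
      = quadraticChar (ZMod p) ((1 - j + k) ^ 2 - 4 * k * 1) + 1 := by
  rw [← count_roots p hp k (1 - j + k) 1 hk]
  have h2 (a : (ZMod p)ˣ) : ∑ b : (ZMod p)ˣ,
      (if (a : ZMod p)⁻¹ + j * (b : ZMod p)⁻¹ + k = 0 then
        (if (a : ZMod p) + b + 1 = 0 then (1 : ℂ) else 0) else 0)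
      = if k * (a : ZMod p) ^ 2 + (1 - j + k) * a + 1 = 0 then 1 else 0 := by
    rw [sum_units (fun b : ZMod p => if (a : ZMod p)⁻¹ + j * b⁻¹ + k = 0 then
        (if (a : ZMod p) + b + 1 = 0 then (1 : ℂ) else 0) else 0),
      Finset.sum_eq_single (-(a : ZMod p) - 1)]
    · have ha := a.ne_zero
      generalize (a : ZMod p) = a at ha
      by_cases hb : -a - 1 = 0
      · -- here `a = -1`, where the quadratic takes the value `j ≠ 0`
        have : a = -1 := by linear_combination -hb
        subst this
        have : ¬ (k * (-1) ^ 2 + (1 - j + k) * (-1) + 1 = 0) := fun h => hj (by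
          linear_combination h)
        rw [if_pos hb, if_neg this]
      · have e : a⁻¹ + j * (-a - 1)⁻¹ + k = 0 ↔ k * a ^ 2 + (1 - j + k) * a + 1 = 0 := by
          have : k * a ^ 2 + (1 - j + k) * a + 1
              = -(a * (-a - 1)) * (a⁻¹ + j * (-a - 1)⁻¹ + k) := by
            have e1 := mul_inv_cancel₀ ha
            have e2 := mul_inv_cancel₀ hb
            linear_combination (-a - 1) * e1 + a * j * e2
          rw [this]
          simp [ha, hb]
        simp only [e, if_neg hb]
        rw [if_pos (by ring : a + (-a - 1) + 1 = 0)]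
    · intro b _ hb
      have : ¬ ((a : ZMod p) + b + 1 = 0) := by grind
      rw [if_neg this, ite_self, ite_self]
    · exact fun h => absurd (Finset.mem_univ _) h
  rw [Finset.sum_congr rfl fun a _ => h2 a,
    sum_units (fun a : ZMod p => if k * a ^ 2 + (1 - j + k) * a + 1 = 0 then (1 : ℂ) else 0)]
  refine Finset.sum_congr rfl fun a _ => ?_
  by_cases h : a = 0 <;> simp [h]

/-- Orthogonality in `u`, followed by the rescaling `x = z a`, `y = z b`. -/
lemma sum_K (p : ℕ) [Fact p.Prime] (j k : ZMod p) :
    ∑ u : ZMod p, K p u * K p (j * u) * K p (k * u)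
      = ∑ a : (ZMod p)ˣ, ∑ b : (ZMod p)ˣ,
        (if (a : ZMod p)⁻¹ + j * (b : ZMod p)⁻¹ + k = 0 then (p : ℂ) else 0) *
          ((if (a : ZMod p) + b + 1 = 0 then (p : ℂ) else 0) - 1) := by
  have h1 (u : ZMod p) : K p u * K p (j * u) * K p (k * u)
      = ∑ z : (ZMod p)ˣ, ∑ a : (ZMod p)ˣ, ∑ b : (ZMod p)ˣ,
        (ZMod.stdAddChar ((z : ZMod p) * ((a : ZMod p) + (b : ZMod p) + 1)) : ℂ) *
          ZMod.stdAddChar (u * ((z : ZMod p)⁻¹ *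
            ((a : ZMod p)⁻¹ + j * (b : ZMod p)⁻¹ + k))) := by
    rw [mul_comm, K_eq p (k * u), Finset.sum_mul]
    refine Finset.sum_congr rfl fun z _ => ?_
    rw [K_eq, K_eq, Finset.sum_mul_sum, Finset.mul_sum]
    symm
    refine Fintype.sum_equiv (Equiv.mulLeft z) _ _ fun a => ?_
    rw [Finset.mul_sum]
    refine Fintype.sum_equiv (Equiv.mulLeft z) _ _ fun b => ?_
    rw [← AddChar.map_add_eq_mul, ← AddChar.map_add_eq_mul, ← AddChar.map_add_eq_mul]
    congr 1
    simp only [Equiv.coe_mulLeft, Units.val_mul, mul_inv]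
    ring
  calc _ = ∑ z : (ZMod p)ˣ, ∑ a : (ZMod p)ˣ, ∑ b : (ZMod p)ˣ,
        (ZMod.stdAddChar ((z : ZMod p) * ((a : ZMod p) + (b : ZMod p) + 1)) : ℂ) *
          (if (a : ZMod p)⁻¹ + j * (b : ZMod p)⁻¹ + k = 0 then (p : ℂ) else 0) := by
        rw [Finset.sum_congr rfl fun u _ => h1 u, Finset.sum_comm]
        refine Finset.sum_congr rfl fun z _ => ?_
        rw [Finset.sum_comm]
        refine Finset.sum_congr rfl fun a _ => ?_
        rw [Finset.sum_comm]
        refine Finset.sum_congr rfl fun b _ => ?_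
        rw [← Finset.mul_sum, sum_char]
        simp only [mul_eq_zero, inv_eq_zero, z.ne_zero, false_or]
    _ = _ := by
        rw [Finset.sum_comm]
        refine Finset.sum_congr rfl fun a _ => ?_
        rw [Finset.sum_comm]
        refine Finset.sum_congr rfl fun b _ => ?_
        rw [← Finset.sum_mul, sum_char_units, mul_comm]

/-- For an odd prime `p > 3` and integers `j, k` not divisible by `p`,
`∑_{u=0}^{p−1} K(u)·K(ju)·K(ku) = (β(1,j,k)/p)·p² + 2p`. -/
theorem stmt11 (p : ℕ) [Fact p.Prime] (hp : 3 < p) (j k : ℤ)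
    (hj : ¬ (p : ℤ) ∣ j) (hk : ¬ (p : ℤ) ∣ k) :
    ∑ u : ZMod p, K p u * K p ((j : ZMod p) * u) * K p ((k : ZMod p) * u)
      = (legendreSym p (β 1 j k) : ℂ) * (p : ℂ) ^ 2 + 2 * (p : ℂ) := by
  have hj' : (j : ZMod p) ≠ 0 := fun h => hj ((ZMod.intCast_zmod_eq_zero_iff_dvd j p).1 h)
  have hk' : (k : ZMod p) ≠ 0 := fun h => hk ((ZMod.intCast_zmod_eq_zero_iff_dvd k p).1 h)
  have hβ : ((β 1 j k : ℤ) : ZMod p) = (1 - (j : ZMod p) + k) ^ 2 - 4 * k * 1 := by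
    unfold β
    push_cast
    ring
  have h0 := count_line p (by omega) (j : ZMod p) k hj' hk'
  have h1 := count_all p (j : ZMod p) k hj' hk'
  rw [← hβ] at h0
  have e (a b : (ZMod p)ˣ) :
      (if (a : ZMod p)⁻¹ + j * (b : ZMod p)⁻¹ + k = 0 then (p : ℂ) else 0) *
          ((if (a : ZMod p) + b + 1 = 0 then (p : ℂ) else 0) - 1)
      = (p : ℂ) ^ 2 * (if (a : ZMod p)⁻¹ + j * (b : ZMod p)⁻¹ + k = 0 then
        (if (a : ZMod p) + b + 1 = 0 then (1 : ℂ) else 0) else 0)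
        - p * (if (a : ZMod p)⁻¹ + j * (b : ZMod p)⁻¹ + k = 0 then (1 : ℂ) else 0) := by
    split_ifs <;> ring
  rw [sum_K]
  simp only [e, Finset.sum_sub_distrib, ← Finset.mul_sum]
  rw [h0, h1, legendreSym]
  ring
end

section
/- Let p ≥ 5 be a prime and set f = p−1. Let M be the p × p matrix with rows and columns indexed by {1, …, p} whose entries are: M_{1,k} = c_{1,1,k} − f for 1 ≤ k ≤ f and M_{1,p} = −f; M_{j,k} = c_{1,j,k} for 2 ≤ j ≤ f and 1 ≤ k ≤ f, with M_{j,p} = 1 for 2 ≤ j ≤ f; and last row M_{p,1} = 0, M_{p,k} = 2 for 2 ≤ k ≤ f, M_{p,p} = 1. Then the Kloosterman sums K(0), K(1), …, K(p−1) are precisely the eigenvalues of M; that is, the characteristic polynomial of M (over ℂ) equals ∏_{u=0}^{p−1} (X − K(u)). -/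
/-!
The matrix `M` is diagonalised explicitly. The Kloosterman sums multiply by the rule
`K(u) K(ju) = ∑_k c_{1,j,k} K(ku) + p·[u(1 - j) = 0]`, the sum running over all residues `k`
(`K_mul_K`), where `c_{1,j,k}` counts the roots of a quadratic polynomial of discriminant
`β(1,j,k)`. Together with `∑_k K(ku) = -p·[u = 0]`, this rule says exactly that the vector with
entries `K(ku)` for `1 ≤ k ≤ p - 1` and last entry `-2 + p·[u = 0]` is an eigenvector of `M` with
eigenvalue `K(u)` (`N_mul_V`).

The argument does not need the `K(u)` to be distinct. The `p` eigenvectors are independent: by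
orthogonality of additive characters, the matrix `V` having them as columns
satisfies `V Vᵀ = p² I - p J + p E`, with `J` the all-ones matrix and `E` the diagonal matrix
unit at the last index, and this is invertible (`isUnit_V`). Hence `M` is similar to
`diag(K(0), …, K(p - 1))`.

Rows and columns are indexed by `ZMod p`, the index `p` becoming `0`.
-/

open scoped BigOperators Polynomial

/-- With `f = p − 1`, the `p × p` matrix with rows and columns indexed by `{1,…,p}`
(realized as `Fin p`, with the index `t : Fin p` corresponding to `t.val + 1`) whose
entries are: first row `M_{1,k} = c_{1,1,k} − f` for `1 ≤ k ≤ f` and `M_{1,p} = −f`;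
rows `2 ≤ j ≤ f`: `M_{j,k} = c_{1,j,k}` for `1 ≤ k ≤ f` and `M_{j,p} = 1`;
last row `M_{p,1} = 0`, `M_{p,k} = 2` for `2 ≤ k ≤ f`, `M_{p,p} = 1`.
Here `c_{i,j,k} = 1 + (β(i,j,k)/p)`. -/
noncomputable def M (p : ℕ) [Fact p.Prime] : Matrix (Fin p) (Fin p) ℂ :=
  Matrix.of fun j k =>
    if j.val = 0 then
      (if k.val + 1 < p then
        ((1 + legendreSym p (β 1 1 (k.val + 1)) : ℤ) : ℂ) - ((p : ℂ) - 1)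
      else -((p : ℂ) - 1))
    else if j.val + 1 < p then
      (if k.val + 1 < p then ((1 + legendreSym p (β 1 (j.val + 1) (k.val + 1)) : ℤ) : ℂ) else 1)
    else
      (if k.val = 0 then 0 else if k.val + 1 < p then 2 else 1)

namespace Kloosterman

variable {p : ℕ} [Fact p.Prime]

/-! ### Kloosterman sums and additive characters -/

/-- The coefficient `c_{1,j,k}` with residues as indices: the discriminant `(1 + j - k)² - 4j` of
`t² + (1 + j - k) t + j` equals `β(1,j,k)`. -/
noncomputable def coeff (j k : ZMod p) : ℂ :=
  1 + ((quadraticChar (ZMod p) ((1 + j - k) ^ 2 - 4 * j) : ℤ) : ℂ)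

lemma K_eq (u : ZMod p) :
    K p u = ∑ x : (ZMod p)ˣ, ZMod.stdAddChar ((x : ZMod p) + u * ((x⁻¹ : (ZMod p)ˣ) : ZMod p)) := by
  unfold K
  refine Finset.sum_congr rfl fun x _ => ?_
  rw [ZMod.stdAddChar_apply, ZMod.toCircle_apply]

lemma sum_char (a : ZMod p) :
    ∑ x : ZMod p, ZMod.stdAddChar (x * a) = if a = 0 then (p : ℂ) else 0 := by
  rw [AddChar.sum_mulShift a (ZMod.isPrimitive_stdAddChar p), ZMod.card]
  split_ifs <;> simp

lemma sum_eq_zero_add_units (g : ZMod p → ℂ) :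
    ∑ x : ZMod p, g x = g 0 + ∑ x : (ZMod p)ˣ, g x := by
  rw [Fintype.sum_eq_add_sum_subtype_ne g 0]
  congr 1
  exact (Fintype.sum_equiv unitsEquivNeZero _ _ fun x => rfl).symm

lemma sum_units_char (a : ZMod p) :
    ∑ x : (ZMod p)ˣ, ZMod.stdAddChar ((x : ZMod p) * a) = (if a = 0 then (p : ℂ) else 0) - 1 := by
  rw [← sum_char a, sum_eq_zero_add_units]
  simp

lemma K_zero : K p 0 = -1 := by
  have h := sum_units_char (1 : ZMod p)
  rw [if_neg one_ne_zero, zero_sub] at h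
  rw [← h, K_eq]
  simp only [zero_mul, add_zero, mul_one]

lemma sum_K_mul (u : ZMod p) :
    ∑ k : ZMod p, K p (k * u) = if u = 0 then -(p : ℂ) else 0 := by
  by_cases hu : u = 0
  · simp [hu, K_zero]
  simp only [K_eq, AddChar.map_add_eq_mul, hu, if_false]
  rw [Finset.sum_comm]
  refine Finset.sum_eq_zero fun x _ => ?_
  rw [← Finset.mul_sum]
  simp only [mul_assoc]
  rw [sum_char, if_neg (mul_ne_zero hu (Units.ne_zero _)), mul_zero]

/-! ### The multiplication law -/

/-- The quadratic `t² + (1 + j - k) t + j` has `c_{1,j,k}` roots, and these are the units `t` with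
`(1 + t)(1 + j / t) = k`. -/
lemma card_units_eq_coeff (hp : p ≠ 2) {j : ZMod p} (hj : j ≠ 0) (k : ZMod p) :
    (((Finset.univ.filter fun t : (ZMod p)ˣ =>
      (1 + (t : ZMod p)) * (1 + j * ((t⁻¹ : (ZMod p)ˣ) : ZMod p)) = k).card : ℕ) : ℂ)
      = coeff j k := by
  have h2 : (2 : ZMod p) ≠ 0 := by
    have := Ring.two_ne_zero (R := ZMod p) (by rwa [ZMod.ringChar_zmod_n])
    exact this
  have h := quadraticChar_card_sqrts (F := ZMod p) (by rwa [ZMod.ringChar_zmod_n])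
    ((1 + j - k) ^ 2 - 4 * j)
  have hc : (Finset.univ.filter fun t : (ZMod p)ˣ =>
      (1 + (t : ZMod p)) * (1 + j * ((t⁻¹ : (ZMod p)ˣ) : ZMod p)) = k).card =
      ({x : ZMod p | x ^ 2 = (1 + j - k) ^ 2 - 4 * j}.toFinset).card := by
    refine Finset.card_bij (fun t _ => 2 * (t : ZMod p) + (1 + j - k)) ?_ ?_ ?_
    · intro t ht
      simp only [Finset.mem_filter, Finset.mem_univ, true_and] at ht
      simp only [Set.mem_toFinset, Set.mem_ofPred_eq]
      rw [← ht]
      have ht0 := t.ne_zero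
      simp only [Units.val_inv_eq_inv_val]
      field_simp
      ring
    · intro t _ s _ hts
      ext
      exact mul_left_cancel₀ h2 (add_right_cancel hts)
    · intro x hx
      simp only [Set.mem_toFinset, Set.mem_ofPred_eq] at hx
      have ht : 2 * ((x - (1 + j - k)) / 2) + (1 + j - k) = x := by
        field_simp
        ring
      set t := (x - (1 + j - k)) / 2 with htdef
      have hq : t ^ 2 + (1 + j - k) * t + j = 0 := by
        rw [← ht] at hx
        have : (2 * 2) * (t ^ 2 + (1 + j - k) * t + j) = 0 := by linear_combination hx
        exact (mul_eq_zero.mp this).resolve_left (mul_ne_zero h2 h2)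
      have ht0 : t ≠ 0 := by
        intro h0
        rw [h0] at hq
        exact hj (by simpa using hq)
      refine ⟨Units.mk0 t ht0, ?_, ht⟩
      simp only [Finset.mem_filter, Finset.mem_univ, true_and, Units.val_inv_eq_inv_val,
        Units.val_mk0]
      field_simp
      linear_combination hq
  rw [coeff, hc]
  have h' := congrArg (Int.cast : ℤ → ℂ) h
  push_cast at h'
  rw [h', add_comm]

/-- The multiplication law of Kloosterman sums. Writing the product as a double sum over `x, y` and
putting `y = t x`, the inner sum over `x` is `K(u (1 + t)(1 + j / t))` unless `t = -1`; collecting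
the `t` with the same value of `(1 + t)(1 + j / t)` gives the coefficients. -/
lemma K_mul_K (hp : p ≠ 2) {j : ZMod p} (hj : j ≠ 0) (u : ZMod p) :
    K p u * K p (j * u) =
      ∑ k : ZMod p, coeff j k * K p (k * u) + if u * (1 - j) = 0 then (p : ℂ) else 0 := by
  have h1 : K p u * K p (j * u) = ∑ t : (ZMod p)ˣ, ∑ x : (ZMod p)ˣ,
      ZMod.stdAddChar ((x : ZMod p) * (1 + (t : ZMod p)) +
        u * (1 + j * ((t⁻¹ : (ZMod p)ˣ) : ZMod p)) * ((x⁻¹ : (ZMod p)ˣ) : ZMod p)) := by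
    rw [K_eq, K_eq, Finset.sum_mul_sum, Finset.sum_comm (s := Finset.univ (α := (ZMod p)ˣ))]
    rw [Finset.sum_comm, Finset.sum_comm (s := Finset.univ (α := (ZMod p)ˣ))
      (f := fun t x : (ZMod p)ˣ => ZMod.stdAddChar ((x : ZMod p) * (1 + (t : ZMod p)) +
        u * (1 + j * ((t⁻¹ : (ZMod p)ˣ) : ZMod p)) * ((x⁻¹ : (ZMod p)ˣ) : ZMod p)))]
    refine Finset.sum_congr rfl fun x _ => ?_
    refine (Fintype.sum_equiv (Equiv.mulLeft x) _ _ fun t => ?_).symm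
    rw [← AddChar.map_add_eq_mul]
    congr 1
    simp only [Equiv.coe_mulLeft, mul_inv, Units.val_mul]
    ring
  have h2 : ∀ t : (ZMod p)ˣ, ∑ x : (ZMod p)ˣ,
      ZMod.stdAddChar ((x : ZMod p) * (1 + (t : ZMod p)) +
        u * (1 + j * ((t⁻¹ : (ZMod p)ˣ) : ZMod p)) * ((x⁻¹ : (ZMod p)ˣ) : ZMod p)) =
      K p ((1 + (t : ZMod p)) * (1 + j * ((t⁻¹ : (ZMod p)ˣ) : ZMod p)) * u) +
        if t = -1 then (if u * (1 - j) = 0 then (p : ℂ) else 0) else 0 := by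
    intro t
    by_cases ht : t = -1
    · subst ht
      have := sum_units_char (u * (1 - j))
      rw [if_pos rfl]
      simp only [Units.val_neg, Units.val_one, add_neg_cancel, zero_mul, mul_zero, zero_add,
        inv_neg, inv_one, K_zero]
      rw [neg_add_eq_sub, ← this]
      refine Fintype.sum_equiv (Equiv.inv _) _ _ fun x => ?_
      congr 1
      simp only [Equiv.inv_apply]
      ring
    · have ht' : 1 + (t : ZMod p) ≠ 0 := by
        intro h
        apply ht
        ext
        rw [Units.val_neg, Units.val_one]
        linear_combination h
      rw [if_neg ht, add_zero, K_eq]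
      refine Fintype.sum_equiv (Equiv.mulRight (Units.mk0 _ ht')) _ _ fun x => ?_
      congr 1
      simp only [Equiv.coe_mulRight, mul_inv, Units.val_mul, Units.val_mk0,
        Units.val_inv_eq_inv_val]
      have := x.ne_zero
      have := t.ne_zero
      field_simp
  rw [h1, Finset.sum_congr rfl fun t _ => h2 t, Finset.sum_add_distrib, Finset.sum_ite_eq',
    if_pos (Finset.mem_univ _)]
  congr 1
  rw [← Finset.sum_fiberwise Finset.univ (fun t : (ZMod p)ˣ =>
    (1 + (t : ZMod p)) * (1 + j * ((t⁻¹ : (ZMod p)ˣ) : ZMod p)))]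
  refine Finset.sum_congr rfl fun k _ => ?_
  rw [← card_units_eq_coeff hp hj k, ← nsmul_eq_mul]
  refine Finset.sum_eq_card_nsmul fun t ht => ?_
  rw [(Finset.mem_filter.mp ht).2]

/-! ### Orthogonality -/

/-- Summing over `u` first forces `k / x + l / y = 0` in the double sum over `x, y`, which leaves a
single character sum over `x`. -/
lemma sum_K_mul_K {k l : ZMod p} (hk : k ≠ 0) (hl : l ≠ 0) :
    ∑ u : ZMod p, K p (k * u) * K p (l * u) = p * ((if k = l then (p : ℂ) else 0) - 1) := by
  have h1 : ∀ u : ZMod p, K p (k * u) * K p (l * u) = ∑ x : (ZMod p)ˣ, ∑ y : (ZMod p)ˣ,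
      ZMod.stdAddChar ((x : ZMod p) + (y : ZMod p)) * ZMod.stdAddChar (u *
        (k * ((x⁻¹ : (ZMod p)ˣ) : ZMod p) + l * ((y⁻¹ : (ZMod p)ˣ) : ZMod p))) := by
    intro u
    rw [K_eq, K_eq, Finset.sum_mul_sum]
    refine Finset.sum_congr rfl fun x _ => Finset.sum_congr rfl fun y _ => ?_
    rw [← AddChar.map_add_eq_mul, ← AddChar.map_add_eq_mul]
    congr 1
    ring
  rw [Finset.sum_congr rfl fun u _ => h1 u, Finset.sum_comm]
  have h2 : ∀ x : (ZMod p)ˣ, ∑ u : ZMod p, ∑ y : (ZMod p)ˣ,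
      ZMod.stdAddChar ((x : ZMod p) + (y : ZMod p)) * ZMod.stdAddChar (u *
        (k * ((x⁻¹ : (ZMod p)ˣ) : ZMod p) + l * ((y⁻¹ : (ZMod p)ˣ) : ZMod p))) =
      p * ZMod.stdAddChar ((x : ZMod p) * (1 - l / k)) := by
    intro x
    rw [Finset.sum_comm]
    simp only [← Finset.mul_sum, sum_char]
    have hy : -(l / k * x) ≠ 0 := neg_ne_zero.mpr (mul_ne_zero (div_ne_zero hl hk) x.ne_zero)
    rw [Finset.sum_eq_single (Units.mk0 _ hy)]
    · rw [if_pos, mul_comm]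
      · congr 2
        simp only [Units.val_mk0]
        ring
      · simp only [Units.val_inv_eq_inv_val, Units.val_mk0]
        have := x.ne_zero
        field_simp
        ring
    · intro y _ hne
      rw [if_neg, mul_zero]
      intro h
      apply hne
      ext
      simp only [Units.val_inv_eq_inv_val, Units.val_mk0] at h ⊢
      have := x.ne_zero
      have := y.ne_zero
      field_simp at h ⊢
      linear_combination h
    · exact fun h => absurd (Finset.mem_univ _) h
  rw [Finset.sum_congr rfl fun x _ => h2 x, ← Finset.mul_sum, sum_units_char]
  congr 3
  rw [sub_eq_zero, eq_div_iff hk, one_mul]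

/-! ### Eigenvectors -/

/-- The matrix `M` with rows and columns indexed by residues; the last index `p` becomes `0`. -/
noncomputable def N (p : ℕ) [Fact p.Prime] : Matrix (ZMod p) (ZMod p) ℂ :=
  Matrix.of fun j k =>
    if j = 1 then (if k ≠ 0 then coeff j k - ((p : ℂ) - 1) else -((p : ℂ) - 1))
    else if j ≠ 0 then (if k ≠ 0 then coeff j k else 1)
    else (if k = 1 then 0 else if k ≠ 0 then 2 else 1)

/-- The matrix whose column `u` is an eigenvector of `N` for `K(u)`: its entries are `K(ku)` for
`k ≠ 0`, and the entry at `k = 0` is `-2` if `u ≠ 0` and `p - 2` if `u = 0`. -/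
noncomputable def V (p : ℕ) [Fact p.Prime] : Matrix (ZMod p) (ZMod p) ℂ :=
  Matrix.of fun k u => if k = 0 then -2 + (if u = 0 then (p : ℂ) else 0) else K p (k * u)

/-- For `k = 0` the discriminant is `(j - 1)²`. -/
lemma coeff_zero_right (j : ZMod p) : coeff j 0 = if j = 1 then 1 else 2 := by
  have h : (1 + j - 0) ^ 2 - 4 * j = (j - 1) ^ 2 := by ring
  rw [coeff, h]
  split_ifs with hj
  · simp [hj]
  · rw [quadraticChar_sq_one' (sub_ne_zero.mpr hj)]
    norm_num

/-- The columns of `V` are eigenvectors. The term `k = 0` of `K_mul_K` and of `sum_K_mul` is absorbed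
by the entry of `V` at `0`. -/
lemma N_mul_V (hp : p ≠ 2) : N p * V p = V p * Matrix.diagonal (K p) := by
  have hS := sum_K_mul (p := p)
  ext j u
  rw [Matrix.mul_apply, Matrix.mul_diagonal]
  by_cases hj1 : j = 1
  · subst hj1
    have hP := K_mul_K hp (one_ne_zero (α := ZMod p)) u
    have hterm : ∀ k : ZMod p, N p 1 k * V p k u =
        coeff 1 k * K p (k * u) - ((p : ℂ) - 1) * K p (k * u) +
        if k = 0 then -((p : ℂ) - 1) * (-2 + (if u = 0 then (p : ℂ) else 0)) +
          (1 - ((p : ℂ) - 1)) else 0 := by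
      intro k
      by_cases hk : k = 0
      · subst hk
        simp [N, V, K_zero, coeff_zero_right]
        ring
      · simp [N, V, hk]
        ring
    rw [Finset.sum_congr rfl fun k _ => hterm k, Finset.sum_add_distrib, Finset.sum_sub_distrib,
      ← Finset.mul_sum, hS, Finset.sum_ite_eq', if_pos (Finset.mem_univ _)]
    simp only [V, Matrix.of_apply, one_ne_zero, if_false, sub_self, mul_zero, if_true,
      one_mul] at hP ⊢
    rw [hP]
    split_ifs <;> ring
  by_cases hj : j = 0
  · subst hj
    have hterm : ∀ k : ZMod p, N p 0 k * V p k u =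
        2 * K p (k * u) +
        (if k = 0 then (-2 + (if u = 0 then (p : ℂ) else 0)) + 2 else 0) +
        (if k = 1 then -2 * K p u else 0) := by
      intro k
      by_cases hk : k = 0
      · subst hk
        simp [N, V, K_zero]
      · by_cases hk1 : k = 1
        · subst hk1
          simp [N, V]
        · simp [N, V, hk, hk1]
    rw [Finset.sum_congr rfl fun k _ => hterm k, Finset.sum_add_distrib, Finset.sum_add_distrib,
      ← Finset.mul_sum, hS, Finset.sum_ite_eq', Finset.sum_ite_eq', if_pos (Finset.mem_univ _),
      if_pos (Finset.mem_univ _)]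
    by_cases hu : u = 0
    · subst hu
      simp [V, K_zero]
      ring
    · simp [V, hu]
  · have hP := K_mul_K hp hj u
    have hterm : ∀ k : ZMod p, N p j k * V p k u =
        coeff j k * K p (k * u) +
        if k = 0 then (-2 + (if u = 0 then (p : ℂ) else 0)) + 2 else 0 := by
      intro k
      by_cases hk : k = 0
      · subst hk
        simp [N, V, K_zero, coeff_zero_right, hj1, hj]
      · simp [N, V, hk, hj1, hj]
    rw [Finset.sum_congr rfl fun k _ => hterm k, Finset.sum_add_distrib,
      Finset.sum_ite_eq', if_pos (Finset.mem_univ _)]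
    simp only [V, Matrix.of_apply, hj, if_false]
    rw [mul_comm (K p (j * u)), hP]
    have : u * (1 - j) = 0 ↔ u = 0 := by
      simp [sub_eq_zero, Ne.symm hj1]
    simp only [this]
    ring

/-! ### Independence of the eigenvectors -/

/-- The rows of `V` are orthogonal up to a rank-two correction. -/
lemma V_mul_transpose (k l : ZMod p) : (V p * (V p).transpose) k l =
    (if k = l then (p : ℂ) ^ 2 else 0) - p + (if k = 0 ∧ l = 0 then (p : ℂ) else 0) := by
  have hrow : ∀ l : ZMod p, l ≠ 0 →
      ∑ u : ZMod p, (-2 + (if u = 0 then (p : ℂ) else 0)) * K p (l * u) = -p := by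
    intro l hl
    have := sum_K_mul l
    simp only [hl, if_false] at this
    simp only [add_mul, Finset.sum_add_distrib, ← Finset.mul_sum, ite_mul, zero_mul,
      Finset.sum_ite_eq', Finset.mem_univ, if_true]
    simp only [mul_comm l, this, zero_mul, K_zero]
    ring
  rw [Matrix.mul_apply]
  simp only [Matrix.transpose_apply, V, Matrix.of_apply]
  by_cases hk : k = 0
  · subst hk
    by_cases hl : l = 0
    · subst hl
      have : ∀ u : ZMod p, (-2 + (if u = 0 then (p : ℂ) else 0)) *
          (-2 + (if u = 0 then (p : ℂ) else 0)) =
          4 + if u = 0 then (p : ℂ) ^ 2 - 4 * p else 0 := by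
        intro u
        split_ifs <;> ring
      simp only [if_true, and_self, this, Finset.sum_add_distrib, Finset.sum_ite_eq',
        Finset.mem_univ, Finset.sum_const, Finset.card_univ, ZMod.card, nsmul_eq_mul]
      ring
    · simp only [if_true, hl, if_false, hrow l hl, Ne.symm hl, and_false]
      ring
  · by_cases hl : l = 0
    · subst hl
      simp only [if_true, hk, if_false, mul_comm (K p (k * _)), hrow k hk, and_true]
      ring
    · simp only [hk, hl, if_false, sum_K_mul_K hk hl, and_self]
      split_ifs <;> ring

lemma isUnit_V : IsUnit (V p) := by
  have hp0 : (p : ℂ) ≠ 0 := by exact_mod_cast (Fact.out : p.Prime).ne_zero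
  suffices h : IsUnit (V p * (V p).transpose) by
    rw [Matrix.isUnit_iff_isUnit_det, Matrix.det_mul] at h
    exact (Matrix.isUnit_iff_isUnit_det _).mpr (isUnit_of_mul_isUnit_left h)
  rw [← Matrix.mulVec_injective_iff_isUnit]
  rw [← Matrix.coe_mulVecLin, ← LinearMap.ker_eq_bot, LinearMap.ker_eq_bot']
  intro b hb
  set s := ∑ l, b l with hs
  have hrow : ∀ k, (p : ℂ) ^ 2 * b k - p * s + (if k = 0 then (p : ℂ) * b 0 else 0) = 0 := by
    intro k
    have := congrFun hb k
    simp only [Matrix.mulVecLin_apply, Matrix.mulVec, dotProduct, V_mul_transpose,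
      Pi.zero_apply] at this
    refine Eq.trans ?_ this
    simp only [add_mul, sub_mul, Finset.sum_add_distrib, Finset.sum_sub_distrib, ite_mul,
      zero_mul, Finset.sum_ite_eq, Finset.mem_univ, if_true, ← Finset.mul_sum, ite_and]
    split_ifs with h
    · simp [hs]
    · simp [hs]
  have h0 : (p + 1 : ℂ) * b 0 = s := by
    have := hrow 0
    simp only [if_true] at this
    apply mul_left_cancel₀ hp0
    linear_combination this
  -- Summing all rows gives a second linear relation between `s` and `b 0`.
  have hsum : (p : ℂ) ^ 2 * s - p * (p * s) + p * b 0 = 0 := by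
    have := Finset.sum_eq_zero (s := Finset.univ) fun k _ => hrow k
    rw [Finset.sum_add_distrib, Finset.sum_sub_distrib, ← Finset.mul_sum, ← hs,
      Finset.sum_ite_eq', if_pos (Finset.mem_univ _), Finset.sum_const, Finset.card_univ,
      ZMod.card, nsmul_eq_mul] at this
    exact this
  have hb0 : b 0 = 0 := by
    apply mul_left_cancel₀ hp0
    linear_combination hsum
  have hs0 : s = 0 := by rw [← h0, hb0, mul_zero]
  ext k
  have := hrow k
  rw [hs0, hb0] at this
  simpa [hp0] using this

lemma charpoly_N (hp : p ≠ 2) :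
    (N p).charpoly = ∏ u : ZMod p, (Polynomial.X - Polynomial.C (K p u)) := by
  obtain ⟨W, hW⟩ := isUnit_V (p := p)
  have h := N_mul_V hp
  rw [← hW] at h
  have hN : N p = W.val * Matrix.diagonal (K p) * W.val⁻¹ := by
    rw [← h, ← Matrix.coe_units_inv, Units.mul_inv_cancel_right]
  rw [hN, Matrix.charpoly_units_conj, Matrix.charpoly_diagonal]

/-! ### Indexing by residues -/

/-- The index `t : Fin p`, standing for `t + 1 ∈ {1, …, p}`, as a residue modulo `p`. -/
noncomputable def indexEquiv (p : ℕ) [Fact p.Prime] : Fin p ≃ ZMod p :=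
  Equiv.ofBijective (fun t : Fin p => ((t.val + 1 : ℕ) : ZMod p)) <| by
    rw [Fintype.bijective_iff_injective_and_card]
    refine ⟨fun s t hst => ?_, by simp [ZMod.card]⟩
    have h := (ZMod.natCast_eq_natCast_iff _ _ _).mp hst
    have h' : s.val ≡ t.val [MOD p] := Nat.ModEq.add_right_cancel' 1 h
    exact Fin.ext (h'.eq_of_lt_of_lt s.isLt t.isLt)

lemma indexEquiv_apply (t : Fin p) : indexEquiv p t = (t.val : ZMod p) + 1 := by
  simp [indexEquiv]

lemma indexEquiv_eq_one (t : Fin p) : indexEquiv p t = 1 ↔ t.val = 0 := by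
  rw [indexEquiv_apply, add_eq_right, ZMod.natCast_eq_zero_iff]
  exact ⟨fun h => Nat.eq_zero_of_dvd_of_lt h t.isLt, fun h => h ▸ dvd_zero p⟩

lemma indexEquiv_ne_zero (t : Fin p) : indexEquiv p t ≠ 0 ↔ t.val + 1 < p := by
  have h : indexEquiv p t = ((t.val + 1 : ℕ) : ZMod p) := rfl
  rw [h, Ne, ZMod.natCast_eq_zero_iff]
  have := t.isLt
  constructor
  · intro hd
    rcases Nat.lt_or_ge (t.val + 1) p with hlt | hge
    · exact hlt
    · exact absurd (by rw [show t.val + 1 = p by omega]) hd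
  · intro hlt hd
    exact absurd (Nat.le_of_dvd (Nat.succ_pos _) hd) (by omega)

lemma coeff_indexEquiv (j k : Fin p) :
    ((1 + legendreSym p (β 1 (j.val + 1) (k.val + 1)) : ℤ) : ℂ) =
      coeff (indexEquiv p j) (indexEquiv p k) := by
  rw [coeff, legendreSym, indexEquiv_apply, indexEquiv_apply, β]
  push_cast
  congr 3
  ring

lemma M_eq : M p = Matrix.reindex (indexEquiv p).symm (indexEquiv p).symm (N p) := by
  ext j k
  have hc := coeff_indexEquiv j k
  simp only [M, N, Matrix.reindex_apply, Matrix.submatrix_apply, Equiv.symm_symm, Matrix.of_apply,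
    indexEquiv_eq_one, indexEquiv_ne_zero, ← hc]
  by_cases hj : j.val = 0
  · simp [hj]
  · simp [hj]

end Kloosterman

/-- For a prime `p ≥ 5`, the Kloosterman sums `K(0), K(1), …, K(p−1)` are
precisely the eigenvalues of `M`: the characteristic polynomial of `M` equals
`∏_{u=0}^{p−1} (X − K(u))`. -/
theorem stmt19 (p : ℕ) [Fact p.Prime] (hp : 5 ≤ p) :
    (M p).charpoly = ∏ u ∈ Finset.range p, (Polynomial.X - Polynomial.C (K p (u : ZMod p))) := by
  rw [Kloosterman.M_eq, Matrix.charpoly_reindex, Kloosterman.charpoly_N (by omega)]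
  symm
  refine Finset.prod_bij (fun (u : ℕ) _ => (u : ZMod p)) (fun _ _ => Finset.mem_univ _) ?_ ?_ ?_
  · intro a ha b hb hab
    exact ((ZMod.natCast_eq_natCast_iff _ _ _).mp hab).eq_of_lt_of_lt
      (Finset.mem_range.mp ha) (Finset.mem_range.mp hb)
  · intro x _
    exact ⟨x.val, Finset.mem_range.mpr x.val_lt, ZMod.natCast_zmod_val x⟩
  · intro _ _
    rfl
end
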